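/- Let 2 < p ≤ 6, 2 < q ≤ 4, ω > 0, and let a > 0 satisfy 2·tanh(((p−2)/2)·√ω·a) = (p/2)^{(q−2)/(p−2)} · ω^{(q−2)/(p−2) − 1/2} · (1 − tanh²(((p−2)/2)·√ω·a))^{(q−2)/(p−2)}. Define u(x) := [ (p/2)·ω·(1 − tanh²( ((p−2)/2)·√ω·(|x| + a) )) ]^{1/(p−2)}. Then u ∈ H¹(ℝ), u > 0 on ℝ, u is twice continuously differentiable on ℝ ∖ {0} with u''(x) + u(x)^{p−1} = ω·u(x) for every x ≠ 0, the one-sided derivatives u'(0⁻) and u'(0⁺) exist, and u'(0⁻) − u'(0⁺) = u(0)^{q−1}. -/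

import Mathlib

open MeasureTheory Real Set

noncomputable section

/-- `u ∈ H¹(ℝ)` with weak derivative `u'`: `u` is continuous, square-integrable,
`u'` is square-integrable, and `u(b) − u(a) = ∫_a^b u'(t) dt` for all `a ≤ b`. -/
def IsH1 (u u' : ℝ → ℝ) : Prop :=
  Continuous u ∧ Integrable (fun x => (u x) ^ 2) ∧ Integrable (fun x => (u' x) ^ 2) ∧
    ∀ a b : ℝ, a ≤ b → u b - u a = ∫ t in a..b, u' t

/-- The mass `‖u‖₂² = ∫_ℝ u(x)² dx`. -/
def mass (u : ℝ → ℝ) : ℝ := ∫ x, (u x) ^ 2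

/-- `D_q(u) = (1/2)∫ u'² − (1/q)|u(0)|^q`. -/
def Dfun (q : ℝ) (u u' : ℝ → ℝ) : ℝ :=
  (1 / 2) * (∫ x, (u' x) ^ 2) - (1 / q) * |u 0| ^ q

/-- `F_{p,q}(u) = (1/2)∫ u'² − (1/p)∫ |u|^p − (1/q)|u(0)|^q`. -/
def Ffun (p q : ℝ) (u u' : ℝ → ℝ) : ℝ :=
  (1 / 2) * (∫ x, (u' x) ^ 2) - (1 / p) * (∫ x, |u x| ^ p) - (1 / q) * |u 0| ^ q

/-!
For every shift `a`, the even function `u x = φ (|x| + a)` inherits its properties from the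
profile `φ y = ((p / 2) ω sech² (κ y)) ^ (1 / (p - 2))`, `κ = (p - 2) √ω / 2`, which solves
`φ' = -√ω tanh (κ ·) φ` and `φ'' = ω φ - φ ^ (p - 1)` and decays like `exp (-√ω y)`: away from `0`
the reflection `x ↦ |x|` does not change second derivatives, and at `0` the first derivative jumps
by `2 φ'(a) = -2 √ω tanh (κ a) φ(a)`. The equation satisfied by `a` says exactly that
`2 √ω tanh (κ a) = φ(a) ^ (q - 2)`.
-/

open Filter Topology Asymptotics

lemma isH1_deriv_off_countable {u : ℝ → ℝ} {s : Set ℝ} (hs : s.Countable) (hu : Continuous u)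
    (hd : ∀ x ∉ s, DifferentiableAt ℝ u x) (hu2 : Integrable fun x => u x ^ 2)
    (hdu2 : Integrable fun x => deriv u x ^ 2) : IsH1 u (deriv u) := by
  refine ⟨hu, hu2, hdu2, fun b c hbc => ?_⟩
  have hLp : MemLp (deriv u) 2 :=
    (memLp_two_iff_integrable_sq (measurable_deriv u).aestronglyMeasurable).2 hdu2
  have hint : IntervalIntegrable (deriv u) volume b c :=
    ((hLp.locallyIntegrable one_le_two).integrableOn_isCompact isCompact_uIcc).intervalIntegrable
  exact (integral_eq_of_hasDerivAt_off_countable_of_le u (deriv u) hbc hs hu.continuousOn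
    (fun x hx => (hd x hx.2).hasDerivAt) hint).symm

section EvenReflection

variable (f : ℝ → ℝ) {x : ℝ}

lemma comp_abs_eventuallyEq_of_pos (hx : 0 < x) : (fun y => f |y|) =ᶠ[𝓝 x] f := by
  filter_upwards [lt_mem_nhds hx] with y hy
  rw [abs_of_pos hy]

lemma comp_abs_eventuallyEq_of_neg (hx : x < 0) :
    (fun y => f |y|) =ᶠ[𝓝 x] fun y => f (-y) := by
  filter_upwards [gt_mem_nhds hx] with y hy
  rw [abs_of_neg hy]

lemma deriv_comp_abs_sq (hx : x ≠ 0) :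
    deriv (fun y => f |y|) x ^ 2 = deriv f |x| ^ 2 := by
  rcases hx.lt_or_gt with hneg | hpos
  · rw [(comp_abs_eventuallyEq_of_neg f hneg).deriv_eq, deriv_comp_neg, neg_sq, abs_of_neg hneg]
  · rw [(comp_abs_eventuallyEq_of_pos f hpos).deriv_eq, abs_of_pos hpos]

lemma deriv_deriv_comp_abs (hx : x ≠ 0) :
    deriv (deriv fun y => f |y|) x = deriv (deriv f) |x| := by
  rcases hx.lt_or_gt with hneg | hpos
  · have hderiv : (deriv fun y => f (-y)) = fun y => -deriv f (-y) :=
      funext fun y => deriv_comp_neg f y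
    rw [(comp_abs_eventuallyEq_of_neg f hneg).deriv.deriv_eq, hderiv, deriv.fun_neg,
      deriv_comp_neg, neg_neg, abs_of_neg hneg]
  · rw [(comp_abs_eventuallyEq_of_pos f hpos).deriv.deriv_eq, abs_of_pos hpos]

variable {f} {f' : ℝ}

lemma contDiffOn_comp_abs {n : ℕ∞} (hf : ContDiff ℝ n f) :
    ContDiffOn ℝ n (fun y => f |y|) {(0 : ℝ)}ᶜ := fun _ hx =>
  (hf.contDiffAt.comp _ (contDiffAt_abs hx)).contDiffWithinAt

lemma hasDerivWithinAt_comp_abs_Ici (hf : HasDerivWithinAt f f' (Ici 0) 0) :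
    HasDerivWithinAt (fun y => f |y|) f' (Ici 0) 0 :=
  hf.congr (fun y hy => by rw [abs_of_nonneg hy]) (by rw [abs_zero])

lemma hasDerivWithinAt_comp_abs_Iic (hf : HasDerivWithinAt f f' (Ici 0) 0) :
    HasDerivWithinAt (fun y => f |y|) (-f') (Iic 0) 0 := by
  have hneg : HasDerivWithinAt (fun y => f (-y)) (-f') (Iic 0) 0 := by
    simpa [Function.comp_def] using HasDerivWithinAt.scomp_of_eq (0 : ℝ) hf
      (hasDerivWithinAt_neg (0 : ℝ) (Iic 0)) (fun y hy => mem_Ici.2 (neg_nonneg.2 hy)) neg_zero.symm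
  exact hneg.congr (fun y hy => by rw [abs_of_nonpos hy]) (by rw [abs_zero, neg_zero])

lemma integrable_comp_abs_of_isBigO_exp_neg {c : ℝ} (hc : 0 < c) (hf : ContinuousOn f (Ici 0))
    (ho : f =O[atTop] fun y => exp (-c * y)) : Integrable fun y => f |y| := by
  have hcont : Continuous fun y => f |y| := hf.comp_continuous continuous_abs abs_nonneg
  refine hcont.locallyIntegrable.integrable_of_isBigO_atTop_of_norm_isNegInvariant
    (g := fun y => exp (-c * y)) (.of_forall fun y => ?_) (ho.congr' ?_ .rfl)
    ⟨Ioi 0, Ioi_mem_atTop 0, exp_neg_integrableOn_Ioi 0 hc⟩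
  · simp only [Function.comp_apply, abs_neg]
  · filter_upwards [eventually_ge_atTop 0] with y hy
    rw [abs_of_nonneg hy]

end EvenReflection

section HyperbolicTangent

lemma one_sub_tanh_sq (x : ℝ) : 1 - tanh x ^ 2 = (cosh x ^ 2)⁻¹ := by
  have hcosh := (cosh_pos x).ne'
  rw [tanh_eq_sinh_div_cosh]
  field_simp
  linarith [cosh_sq x]

lemma one_sub_tanh_sq_pos (x : ℝ) : 0 < 1 - tanh x ^ 2 :=
  sub_pos.2 (tanh_sq_lt_one x)

lemma one_sub_tanh_sq_le_exp (x : ℝ) : 1 - tanh x ^ 2 ≤ 4 * exp (-2 * x) := by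
  have hcosh : exp x / 2 ≤ cosh x := by
    rw [cosh_eq]
    linarith [exp_pos (-x)]
  calc 1 - tanh x ^ 2 = (cosh x ^ 2)⁻¹ := one_sub_tanh_sq x
    _ ≤ ((exp x / 2) ^ 2)⁻¹ := by gcongr
    _ = 4 * (exp x ^ 2)⁻¹ := by rw [div_pow, inv_div]; norm_num [div_eq_mul_inv]
    _ = 4 * exp (-2 * x) := by rw [← exp_nat_mul, ← exp_neg]; norm_num

lemma contDiff_tanh {n : WithTop ℕ∞} : ContDiff ℝ n tanh := by
  rw [funext tanh_eq_sinh_div_cosh]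
  exact contDiff_sinh.div contDiff_cosh fun x => (cosh_pos x).ne'

lemma hasDerivAt_tanh (x : ℝ) : HasDerivAt tanh (1 - tanh x ^ 2) x := by
  have hquot := (hasDerivAt_sinh x).fun_div (hasDerivAt_cosh x) (cosh_pos x).ne'
  rw [← funext tanh_eq_sinh_div_cosh] at hquot
  refine hquot.congr_deriv ?_
  rw [one_sub_tanh_sq, ← sq, ← sq, cosh_sq, add_sub_cancel_left, one_div]

lemma hasDerivAt_tanh_const_mul (k x : ℝ) :
    HasDerivAt (fun y => tanh (k * y)) (k * (1 - tanh (k * x) ^ 2)) x := by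
  have hcomp := (hasDerivAt_tanh (k * x)).comp x (hasDerivAt_const_mul k)
  rwa [mul_comm] at hcomp

end HyperbolicTangent

/-- The bright soliton `((p / 2) ω sech² ((p - 2) √ω y / 2)) ^ (1 / (p - 2))`, the even positive
solution on the line of `φ'' + φ ^ (p - 1) = ω φ`, from which `u` is obtained by cutting at `a` and
reflecting. `sech²` is written as `1 - tanh²`. -/
def soliton (p ω y : ℝ) : ℝ :=
  ((p / 2) * ω * (1 - tanh ((p - 2) / 2 * √ω * y) ^ 2)) ^ (1 / (p - 2))

section Soliton

variable {p ω : ℝ}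

lemma soliton_base_pos (hp : 0 < p) (hω : 0 < ω) (z : ℝ) :
    0 < (p / 2) * ω * (1 - tanh z ^ 2) :=
  mul_pos (by positivity) (one_sub_tanh_sq_pos z)

lemma soliton_pos (hp : 0 < p) (hω : 0 < ω) (y : ℝ) : 0 < soliton p ω y :=
  rpow_pos_of_pos (soliton_base_pos hp hω _) _

lemma soliton_rpow (hp : 0 < p) (hω : 0 < ω) (r y : ℝ) :
    soliton p ω y ^ r =
      ((p / 2) * ω * (1 - tanh ((p - 2) / 2 * √ω * y) ^ 2)) ^ (r / (p - 2)) := by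
  rw [soliton, ← rpow_mul (soliton_base_pos hp hω _).le, one_div_mul_eq_div]

lemma soliton_rpow_sub_one (hp : 0 < p) (hp2 : p ≠ 2) (hω : 0 < ω) (y : ℝ) :
    soliton p ω y ^ (p - 1) =
      (p / 2) * ω * (1 - tanh ((p - 2) / 2 * √ω * y) ^ 2) * soliton p ω y := by
  rw [show p - 1 = p - 2 + 1 by ring, rpow_add_one (soliton_pos hp hω y).ne',
    soliton_rpow hp hω, div_self (sub_ne_zero.2 hp2), rpow_one]

lemma contDiff_soliton {n : WithTop ℕ∞} (hp : 0 < p) (hω : 0 < ω) :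
    ContDiff ℝ n (soliton p ω) :=
  (contDiff_const.mul (contDiff_const.sub
    ((contDiff_tanh.comp (contDiff_const.mul contDiff_id)).pow 2))).rpow_const_of_ne
      fun _ => (soliton_base_pos hp hω _).ne'

lemma hasDerivAt_soliton (hp : 0 < p) (hp2 : p ≠ 2) (hω : 0 < ω) (y : ℝ) :
    HasDerivAt (soliton p ω) (-√ω * tanh ((p - 2) / 2 * √ω * y) * soliton p ω y) y := by
  have hbase := soliton_base_pos hp hω ((p - 2) / 2 * √ω * y)
  have hderiv := ((((hasDerivAt_tanh_const_mul ((p - 2) / 2 * √ω) y).fun_pow 2).const_sub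
    1).const_mul (p / 2 * ω)).rpow_const (p := 1 / (p - 2)) (Or.inl hbase.ne')
  refine hderiv.congr_deriv ?_
  rw [rpow_sub_one hbase.ne', ← soliton]
  have hp2' : p - 2 ≠ 0 := sub_ne_zero.2 hp2
  have hsech := (one_sub_tanh_sq_pos ((p - 2) / 2 * √ω * y)).ne'
  generalize tanh ((p - 2) / 2 * √ω * y) = T at hsech ⊢
  field_simp
  ring

lemma deriv_soliton (hp : 0 < p) (hp2 : p ≠ 2) (hω : 0 < ω) :
    deriv (soliton p ω) = fun y => -√ω * tanh ((p - 2) / 2 * √ω * y) * soliton p ω y :=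
  funext fun y => (hasDerivAt_soliton hp hp2 hω y).deriv

lemma deriv_deriv_soliton (hp : 0 < p) (hp2 : p ≠ 2) (hω : 0 < ω) (y : ℝ) :
    deriv (deriv (soliton p ω)) y = ω * soliton p ω y - soliton p ω y ^ (p - 1) := by
  have hderiv := ((hasDerivAt_tanh_const_mul ((p - 2) / 2 * √ω) y).const_mul (-√ω)).fun_mul
    (hasDerivAt_soliton hp hp2 hω y)
  rw [deriv_soliton hp hp2 hω, hderiv.deriv, soliton_rpow_sub_one hp hp2 hω]
  linear_combination (tanh ((p - 2) / 2 * √ω * y) ^ 2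
    - (p - 2) / 2 * (1 - tanh ((p - 2) / 2 * √ω * y) ^ 2)) * soliton p ω y * sq_sqrt hω.le

lemma deriv_soliton_sq_le (hp : 0 < p) (hp2 : p ≠ 2) (hω : 0 < ω) (y : ℝ) :
    deriv (soliton p ω) y ^ 2 ≤ ω * soliton p ω y ^ 2 := by
  rw [deriv_soliton hp hp2 hω]
  calc (-√ω * tanh ((p - 2) / 2 * √ω * y) * soliton p ω y) ^ 2
      = tanh ((p - 2) / 2 * √ω * y) ^ 2 * (ω * soliton p ω y ^ 2) := by
        rw [mul_pow, mul_pow, neg_sq, sq_sqrt hω.le]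
        ring
    _ ≤ ω * soliton p ω y ^ 2 :=
        mul_le_of_le_one_left (by positivity) (tanh_sq_lt_one _).le

lemma soliton_le_exp (hp : 2 < p) (hω : 0 < ω) (y : ℝ) :
    soliton p ω y ≤ (2 * p * ω) ^ (1 / (p - 2)) * exp (-√ω * y) := by
  have hp0 : 0 < p := by linarith
  have hp2 : 0 < p - 2 := sub_pos.2 hp
  calc soliton p ω y
      ≤ ((p / 2) * ω * (4 * exp (-2 * ((p - 2) / 2 * √ω * y)))) ^ (1 / (p - 2)) :=
        rpow_le_rpow (soliton_base_pos hp0 hω _).le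
          (by gcongr; exact one_sub_tanh_sq_le_exp _) (by positivity)
    _ = (2 * p * ω * exp (-((p - 2) * √ω * y))) ^ (1 / (p - 2)) := by ring_nf
    _ = (2 * p * ω) ^ (1 / (p - 2)) * exp (-√ω * y) := by
        rw [mul_rpow (by positivity) (exp_pos _).le, ← exp_mul]
        congr 2
        field_simp

lemma soliton_sq_isBigO_exp (hp : 2 < p) (hω : 0 < ω) (a : ℝ) :
    (fun y => soliton p ω (y + a) ^ 2) =O[atTop] fun y => exp (-(2 * √ω) * y) := by
  refine .of_bound (((2 * p * ω) ^ (1 / (p - 2)) * exp (-√ω * a)) ^ 2) (.of_forall fun y => ?_)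
  rw [norm_of_nonneg (sq_nonneg _), norm_of_nonneg (exp_pos _).le]
  calc soliton p ω (y + a) ^ 2
      ≤ ((2 * p * ω) ^ (1 / (p - 2)) * exp (-√ω * (y + a))) ^ 2 :=
        pow_le_pow_left₀ (soliton_pos (by linarith) hω _).le (soliton_le_exp hp hω _) 2
    _ = ((2 * p * ω) ^ (1 / (p - 2)) * exp (-√ω * a)) ^ 2 * exp (-(2 * √ω) * y) := by
        rw [mul_add, exp_add, mul_pow, mul_pow, mul_pow, ← exp_nat_mul _ 2]
        ring_nf

-- The right-hand side is arranged as in the equation defining `a`, up to the factor `√ω`.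
lemma soliton_rpow_sub_two (hp : 0 < p) (hω : 0 < ω) (q y : ℝ) :
    soliton p ω y ^ (q - 2) =
      √ω * ((p / 2) ^ ((q - 2) / (p - 2)) * ω ^ ((q - 2) / (p - 2) - 1 / 2) *
        (1 - tanh ((p - 2) / 2 * √ω * y) ^ 2) ^ ((q - 2) / (p - 2))) := by
  rw [soliton_rpow hp hω, mul_rpow (by positivity) (one_sub_tanh_sq_pos _).le,
    mul_rpow (by positivity) hω.le, rpow_sub hω, ← sqrt_eq_rpow]
  field_simp

end Soliton

section SolitonAbsAdd

variable {p ω : ℝ}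

lemma contDiff_soliton_add_const {n : WithTop ℕ∞} (hp : 0 < p) (hω : 0 < ω) (a : ℝ) :
    ContDiff ℝ n fun y => soliton p ω (y + a) :=
  (contDiff_soliton hp hω).comp (contDiff_id.add contDiff_const)

lemma integrable_soliton_abs_add_sq (hp : 2 < p) (hω : 0 < ω) (a : ℝ) :
    Integrable fun x => soliton p ω (|x| + a) ^ 2 :=
  integrable_comp_abs_of_isBigO_exp_neg (f := fun y => soliton p ω (y + a) ^ 2)
    (mul_pos two_pos (sqrt_pos.2 hω))
    ((contDiff_soliton_add_const (n := 0) (by linarith) hω a).continuous.pow 2).continuousOn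
    (soliton_sq_isBigO_exp hp hω a)

lemma integrable_deriv_soliton_abs_add_sq (hp : 2 < p) (hω : 0 < ω) (a : ℝ) :
    Integrable fun x => deriv (fun y => soliton p ω (|y| + a)) x ^ 2 := by
  refine ((integrable_soliton_abs_add_sq hp hω a).const_mul ω).mono'
    ((measurable_deriv _).pow_const 2).aestronglyMeasurable ?_
  filter_upwards [volume.ae_ne 0] with x hx
  rw [norm_of_nonneg (sq_nonneg _), deriv_comp_abs_sq (fun y => soliton p ω (y + a)) hx,
    deriv_comp_add_const]
  exact deriv_soliton_sq_le (by linarith) hp.ne' hω _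

lemma contDiffOn_soliton_abs_add {n : ℕ∞} (hp : 0 < p) (hω : 0 < ω) (a : ℝ) :
    ContDiffOn ℝ n (fun x => soliton p ω (|x| + a)) {(0 : ℝ)}ᶜ :=
  contDiffOn_comp_abs (contDiff_soliton_add_const hp hω a)

lemma isH1_soliton_abs_add (hp : 2 < p) (hω : 0 < ω) (a : ℝ) :
    IsH1 (fun x => soliton p ω (|x| + a)) (deriv fun x => soliton p ω (|x| + a)) := by
  have hp0 : 0 < p := by linarith
  have hcont : Continuous fun x => soliton p ω (|x| + a) :=
    (contDiff_soliton_add_const (n := 0) hp0 hω a).continuous.comp continuous_abs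
  have hdiff : ∀ x ∉ ({0} : Set ℝ), DifferentiableAt ℝ (fun x => soliton p ω (|x| + a)) x :=
    fun x hx => ((contDiffOn_soliton_abs_add hp0 hω a).differentiableOn one_ne_zero
      x hx).differentiableAt (isOpen_compl_singleton.mem_nhds hx)
  exact isH1_deriv_off_countable (countable_singleton 0) hcont hdiff
    (integrable_soliton_abs_add_sq hp hω a) (integrable_deriv_soliton_abs_add_sq hp hω a)

lemma deriv_deriv_soliton_abs_add (hp : 0 < p) (hp2 : p ≠ 2) (hω : 0 < ω) (a : ℝ) {x : ℝ}
    (hx : x ≠ 0) :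
    deriv (deriv fun y => soliton p ω (|y| + a)) x =
      ω * soliton p ω (|x| + a) - soliton p ω (|x| + a) ^ (p - 1) := by
  have hshift : (deriv fun y => soliton p ω (y + a)) = fun y => deriv (soliton p ω) (y + a) :=
    funext fun y => deriv_comp_add_const (soliton p ω) a y
  rw [deriv_deriv_comp_abs (fun y => soliton p ω (y + a)) hx, hshift, deriv_comp_add_const,
    deriv_deriv_soliton hp hp2 hω]

end SolitonAbsAdd

theorem stmt18_general (p q ω a : ℝ) (hp : 2 < p) (hω : 0 < ω)
    (hA : 2 * Real.tanh ((p - 2) / 2 * Real.sqrt ω * a) =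
      (p / 2) ^ ((q - 2) / (p - 2)) * ω ^ ((q - 2) / (p - 2) - 1 / 2) *
        (1 - Real.tanh ((p - 2) / 2 * Real.sqrt ω * a) ^ 2) ^ ((q - 2) / (p - 2)))
    (u : ℝ → ℝ)
    (hu : u = fun x => ((p / 2) * ω *
      (1 - Real.tanh ((p - 2) / 2 * Real.sqrt ω * (|x| + a)) ^ 2)) ^ (1 / (p - 2))) :
    (∃ u' : ℝ → ℝ, IsH1 u u') ∧
    (∀ x, 0 < u x) ∧
    ContDiffOn ℝ 2 u {(0 : ℝ)}ᶜ ∧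
    (∀ x : ℝ, x ≠ 0 → deriv (deriv u) x + u x ^ (p - 1) = ω * u x) ∧
    (∃ dminus dplus : ℝ,
      HasDerivWithinAt u dminus (Set.Iic 0) 0 ∧
      HasDerivWithinAt u dplus (Set.Ici 0) 0 ∧
      dminus - dplus = u 0 ^ (q - 1)) := by
  have hp0 : 0 < p := by linarith
  change u = fun x => soliton p ω (|x| + a) at hu
  subst hu
  have hslope : HasDerivAt (fun y => soliton p ω (y + a))
      (-√ω * tanh ((p - 2) / 2 * √ω * a) * soliton p ω a) 0 := by
    simpa only [zero_add] using (hasDerivAt_soliton hp0 hp.ne' hω (0 + a)).comp_add_const 0 a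
  refine ⟨⟨_, isH1_soliton_abs_add hp hω a⟩, fun x => soliton_pos hp0 hω _,
    contDiffOn_soliton_abs_add hp0 hω a, fun x hx => ?_, _, _,
    hasDerivWithinAt_comp_abs_Iic hslope.hasDerivWithinAt,
    hasDerivWithinAt_comp_abs_Ici hslope.hasDerivWithinAt, ?_⟩
  · rw [deriv_deriv_soliton_abs_add hp0 hp.ne' hω a hx, sub_add_cancel]
  · have hmatch : soliton p ω a ^ (q - 2) = √ω * (2 * tanh ((p - 2) / 2 * √ω * a)) := by
      rw [hA, soliton_rpow_sub_two hp0 hω]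
    simp only [abs_zero, zero_add]
    rw [show q - 1 = q - 2 + 1 by ring, rpow_add_one (soliton_pos hp0 hω a).ne', hmatch]
    ring

theorem stmt18 (p q ω a : ℝ) (hp : 2 < p) (hp' : p ≤ 6) (hq : 2 < q) (hq' : q ≤ 4)
    (hω : 0 < ω) (ha : 0 < a)
    (hA : 2 * Real.tanh ((p - 2) / 2 * Real.sqrt ω * a) =
      (p / 2) ^ ((q - 2) / (p - 2)) * ω ^ ((q - 2) / (p - 2) - 1 / 2) *
        (1 - Real.tanh ((p - 2) / 2 * Real.sqrt ω * a) ^ 2) ^ ((q - 2) / (p - 2)))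
    (u : ℝ → ℝ)
    (hu : u = fun x => ((p / 2) * ω *
      (1 - Real.tanh ((p - 2) / 2 * Real.sqrt ω * (|x| + a)) ^ 2)) ^ (1 / (p - 2))) :
    (∃ u' : ℝ → ℝ, IsH1 u u') ∧
    (∀ x, 0 < u x) ∧
    ContDiffOn ℝ 2 u {(0 : ℝ)}ᶜ ∧
    (∀ x : ℝ, x ≠ 0 → deriv (deriv u) x + u x ^ (p - 1) = ω * u x) ∧
    (∃ dminus dplus : ℝ,
      HasDerivWithinAt u dminus (Set.Iic 0) 0 ∧
      HasDerivWithinAt u dplus (Set.Ici 0) 0 ∧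
      dminus - dplus = u 0 ^ (q - 1)) :=
  stmt18_general p q ω a hp hω hA u hu
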